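/- Let n ≥ 3, k ≥ 1 be integers and q ≥ 3 a prime. Then v_q(σ_k(n)) < (q−2)·log γ(n)/log q + (1.385 log k + 1.066)·log n/(log q · log log n) + 4(log log log n + 1)/log q, where γ(n) is the squarefree kernel of n. -/

import Mathlib

open ArithmeticFunction Real

lemma vs_qpow_le (p q e : ℕ) (hp : 2 ≤ p) (hq : q.Prime) (hq3 : 3 ≤ q) (he1 : e ∣ q - 1)
    (hmin : ∀ m, 0 < m → m < e → ¬ q ∣ p ^ m - 1) (hw : ℕ) (hdvd : q ^ hw ∣ p ^ e - 1) :
    p * q ^ hw ≤ p ^ (q - 2) * (p + 1) := by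
  have hele : e ≤ q - 1 := Nat.le_of_dvd (by omega) he1
  have he0 : 0 < e := Nat.pos_of_dvd_of_pos he1 (by omega)
  have hpe : p ≤ p ^ e := Nat.le_self_pow (by omega) p
  by_cases h : e = q - 1
  · have hodd : Odd q := hq.odd_of_ne_two (by omega)
    obtain ⟨r, hr⟩ := hodd
    have her : e = r * 2 := by omega
    have hfac : p ^ e - 1 = (p ^ r + 1) * (p ^ r - 1) := by
      rw [her, pow_mul]
      have := Nat.sq_sub_sq (p ^ r) 1
      simpa using this
    rw [hfac] at hdvd
    have hnd : ¬ q ∣ p ^ r - 1 := hmin r (by omega) (by omega)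
    have hcop : Nat.Coprime (q ^ hw) (p ^ r - 1) :=
      Nat.Coprime.pow_left _ ((Nat.Prime.coprime_iff_not_dvd hq).2 hnd)
    have h1 : q ^ hw ∣ p ^ r + 1 := hcop.dvd_of_dvd_mul_right hdvd
    have h2 : q ^ hw ≤ p ^ r + 1 := Nat.le_of_dvd (by positivity) h1
    have h3 : p ^ r ≤ p ^ (q - 2) := Nat.pow_le_pow_right (by omega) (by omega)
    have h4 : p ≤ p ^ (q - 2) := Nat.le_self_pow (by omega) p
    nlinarith
  · have h2 : q ^ hw ≤ p ^ e - 1 := Nat.le_of_dvd (by omega) hdvd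
    have h3 : p ^ e ≤ p ^ (q - 2) := Nat.pow_le_pow_right (by omega) (by omega)
    have : q ^ hw ≤ p ^ (q - 2) := by omega
    nlinarith

lemma vs_local (p q k a : ℕ) (hp : p.Prime) (hq : q.Prime) (hq3 : 3 ≤ q) (hk : 1 ≤ k)
    (ha : 1 ≤ a) :
    2 * p * q ^ (padicValNat q (sigma k (p ^ a))) ≤ p ^ (q - 2) * k * (p + 1) * (a + 1) := by
  have : Fact q.Prime := ⟨hq⟩
  have hp2 := hp.two_le
  have hodd : Odd q := hq.odd_of_ne_two (by omega)
  set S := sigma k (p ^ a) with hS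
  have hSsum : S = ∑ i ∈ Finset.range (a + 1), (p ^ k) ^ i := by
    rw [hS, sigma_apply_prime_pow hp]
    refine Finset.sum_congr rfl fun i _ => ?_
    rw [← pow_mul, mul_comm]
  have hS0 : S ≠ 0 := by
    rw [hSsum, Finset.sum_range_succ']; simp
  have hx2 : p ≤ p ^ k := Nat.le_self_pow (by omega) p
  have hgeom : S * (p ^ k - 1) = (p ^ k) ^ (a + 1) - 1 := by
    have h := Nat.geomSum_eq (m := p ^ k) (by omega) (a + 1)
    have hd : p ^ k - 1 ∣ (p ^ k) ^ (a + 1) - 1 := by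
      simpa using Nat.sub_dvd_pow_sub_pow (p ^ k) 1 (a + 1)
    rw [hSsum, h, Nat.div_mul_cancel hd]
  have hpp : p ≤ p ^ (q - 2) := Nat.le_self_pow (by omega) p
  have hfin : ∀ y, y ≤ a + 1 → 2 * p * y ≤ p ^ (q - 2) * k * (p + 1) * (a + 1) := by
    intro y hy
    calc 2 * p * y ≤ 2 * p * (a + 1) := by gcongr
      _ = p * 1 * 2 * (a + 1) := by ring
      _ ≤ _ := by gcongr; omega
  by_cases hv : q ∣ S
  swap
  · rw [padicValNat.eq_zero_of_not_dvd hv]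
    exact hfin _ (by simp)
  have hqp : ¬ q ∣ p := by
    intro h
    apply hq.one_lt.ne'
    have h1 : q ∣ ∑ i ∈ Finset.range a, (p ^ k) ^ (i + 1) :=
      Finset.dvd_sum fun i _ => dvd_pow (dvd_pow h (by omega)) (by omega)
    rw [hSsum, Finset.sum_range_succ'] at hv
    have := (Nat.dvd_add_right h1).1 hv
    simpa using this
  have hqpk : ¬ q ∣ p ^ k := fun h => hqp (hq.dvd_of_dvd_pow h)
  have hval : padicValNat q ((p ^ k) ^ (a + 1) - 1) = padicValNat q S + padicValNat q (p ^ k - 1) := by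
    rw [← hgeom, padicValNat.mul hS0 (by omega)]
  by_cases hd : q ∣ p ^ k - 1
  · have h := padicValNat.pow_sub_pow (p := q) hodd (x := p ^ k) (y := 1) (by omega) hd hqpk
      (n := a + 1) (by omega)
    rw [one_pow, hval] at h
    have : padicValNat q S = padicValNat q (a + 1) := by omega
    rw [this]
    exact hfin _ (Nat.le_of_dvd (by omega) pow_padicValNat_dvd)
  · rw [padicValNat.eq_zero_of_not_dvd hd, add_zero] at hval
    have key : ∀ m, q ∣ p ^ m - 1 ↔ (p : ZMod q) ^ m = 1 := by
      intro m
      have : 1 ≤ p ^ m := Nat.one_le_pow _ _ (by omega)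
      rw [← ZMod.natCast_eq_zero_iff, Nat.cast_sub this]
      simp [sub_eq_zero]
    set e := orderOf (p : ZMod q) with he
    have hp0 : (p : ZMod q) ≠ 0 := by rwa [Ne, ZMod.natCast_eq_zero_iff]
    have he1 : e ∣ q - 1 := orderOf_dvd_of_pow_eq_one (ZMod.pow_card_sub_one_eq_one hp0)
    have he0 : 0 < e := Nat.pos_of_dvd_of_pos he1 (by omega)
    have hqe : q ∣ p ^ e - 1 := (key e).2 (pow_orderOf_eq_one _)
    have hek : e ∣ k * (a + 1) := by
      apply orderOf_dvd_of_pow_eq_one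
      rw [← key, pow_mul, ← hgeom]
      exact hv.mul_right _
    have he2 : 2 ≤ e := by
      by_contra hlt
      have : e = 1 := by omega
      apply hd
      rw [key, ← orderOf_dvd_iff_pow_eq_one, ← he, this]
      exact one_dvd _
    obtain ⟨t, ht⟩ := hek
    have ht0 : t ≠ 0 := by
      rintro rfl
      have : 0 < k * (a + 1) := by positivity
      omega
    have hpe : p ≤ p ^ e := Nat.le_self_pow (by omega) p
    have h := padicValNat.pow_sub_pow (p := q) hodd (x := p ^ e) (y := 1) (by omega) hqe
      (fun h => hqp (hq.dvd_of_dvd_pow h)) (n := t) ht0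
    rw [one_pow, ← pow_mul, ← ht, pow_mul, hval] at h
    rw [h, pow_add]
    have hA := vs_qpow_le p q e hp2 hq hq3 he1 (by
      intro m hm hme hdv
      rw [key] at hdv
      exact absurd (orderOf_le_of_pow_eq_one hm hdv) (by omega)) _ pow_padicValNat_dvd
    have hB : q ^ padicValNat q t ≤ t := Nat.le_of_dvd (by omega) pow_padicValNat_dvd
    have hC : 2 * t ≤ k * (a + 1) := by rw [ht]; gcongr
    calc _ = (p * q ^ padicValNat q (p ^ e - 1)) * (2 * q ^ padicValNat q t) := by ring
      _ ≤ (p ^ (q - 2) * (p + 1)) * (2 * t) := by gcongr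
      _ ≤ (p ^ (q - 2) * (p + 1)) * (k * (a + 1)) := by gcongr
      _ = _ := by ring

lemma vs_val_prod (n k q : ℕ) (hn : n ≠ 0) (hq : q.Prime) :
    padicValNat q (sigma k n) =
      ∑ p ∈ n.primeFactors, padicValNat q (sigma k (p ^ n.factorization p)) := by
  have h := (isMultiplicative_sigma (k := k)).multiplicative_factorization (sigma k) hn
  rw [h, Finsupp.prod, ← Nat.factorization_def _ hq, Nat.factorization_prod]
  · rw [Finsupp.finsetSum_apply]
    simp only [Nat.support_factorization]
    exact Finset.sum_congr rfl fun p _ => Nat.factorization_def _ hq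
  · intro p hp
    have hpp := Nat.prime_of_mem_primeFactors (by simpa using hp)
    have : 0 < sigma k (p ^ n.factorization p) := by
      rw [sigma_pos_iff]; exact pow_pos hpp.pos _
    omega

/-- local remainder -/
noncomputable def vsG (p a : ℕ) : ℝ := Real.log ((1 + 1 / (p : ℝ)) * ((a : ℝ) + 1) / 2)

lemma vs_local_log (p q k a : ℕ) (hp : p.Prime) (hq : q.Prime) (hq3 : 3 ≤ q) (hk : 1 ≤ k)
    (ha : 1 ≤ a) :
    (padicValNat q (sigma k (p ^ a)) : ℝ) * Real.log q ≤
      (q - 2 : ℝ) * Real.log p + Real.log k + vsG p a := by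
  have h := vs_local p q k a hp hq hq3 hk ha
  have hp0 : (0 : ℝ) < p := by exact_mod_cast hp.pos
  have hq0 : (0 : ℝ) < q := by exact_mod_cast hq.pos
  have hk0 : (0 : ℝ) < k := by exact_mod_cast hk
  have h' : (q : ℝ) ^ (padicValNat q (sigma k (p ^ a))) ≤
      (p : ℝ) ^ (q - 2) * k * ((1 + 1 / (p : ℝ)) * ((a : ℝ) + 1) / 2) := by
    have h2 : (2 * p * q ^ (padicValNat q (sigma k (p ^ a))) : ℝ) ≤
      p ^ (q - 2) * k * (p + 1) * (a + 1) := by exact_mod_cast h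
    have e : (p : ℝ) ^ (q - 2) * k * ((1 + 1 / (p : ℝ)) * ((a : ℝ) + 1) / 2)
      = (p ^ (q - 2) * k * (p + 1) * (a + 1)) / (2 * p) := by field_simp
    rw [e, le_div_iff₀ (by positivity)]
    linarith
  have h3 := Real.log_le_log (by positivity) h'
  rw [Real.log_pow, Real.log_mul (by positivity) (by positivity),
    Real.log_mul (by positivity) (by positivity), Real.log_pow,
    Nat.cast_sub (by omega)] at h3
  rw [vsG]
  push_cast at h3
  exact h3

lemma vs_main (n k q : ℕ) (hn : n ≠ 0) (hk : 1 ≤ k) (hq : q.Prime) (hq3 : 3 ≤ q) :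
    (padicValNat q (sigma k n) : ℝ) * Real.log q ≤
      (q - 2 : ℝ) * Real.log (∏ p ∈ n.primeFactors, (p : ℝ)) +
      n.primeFactors.card * Real.log k + ∑ p ∈ n.primeFactors, vsG p (n.factorization p) := by
  rw [vs_val_prod n k q hn hq, Nat.cast_sum, Finset.sum_mul, Real.log_prod, Finset.mul_sum, ← nsmul_eq_mul, ← Finset.sum_const,
    ← Finset.sum_add_distrib, ← Finset.sum_add_distrib]
  · refine Finset.sum_le_sum fun p hp => ?_
    have hpp := Nat.prime_of_mem_primeFactors hp
    exact vs_local_log p q k _ hpp hq hq3 hk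
      (hpp.factorization_pos_of_dvd hn (Nat.dvd_of_mem_primeFactors hp))
  · intro p hp
    exact_mod_cast (Nat.prime_of_mem_primeFactors hp).ne_zero

lemma vs_nth_step (m : ℕ) (h : 5 ≤ Nat.nth Nat.Prime m) :
    Nat.nth Nat.Prime m + 6 ≤ Nat.nth Nat.Prime (m + 2) := by
  have inf := Nat.infinite_setOfPred_prime
  have h1 : Nat.nth Nat.Prime m < Nat.nth Nat.Prime (m + 1) :=
    Nat.nth_strictMono inf (by omega)
  have h2 : Nat.nth Nat.Prime (m + 1) < Nat.nth Nat.Prime (m + 2) :=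
    Nat.nth_strictMono inf (by omega)
  have key : ∀ p : ℕ, p.Prime → 5 ≤ p → p % 2 = 1 ∧ (p % 3 = 1 ∨ p % 3 = 2) := by
    intro p hp h5
    refine ⟨Nat.odd_iff.1 (hp.odd_of_ne_two (by omega)), ?_⟩
    by_contra hne
    have h : p % 3 = 0 := by omega
    have := (Nat.prime_dvd_prime_iff_eq Nat.prime_three hp).1 (Nat.dvd_of_mod_eq_zero h)
    omega
  have k0 := key _ (Nat.prime_nth_prime m) h
  have k1 := key _ (Nat.prime_nth_prime (m + 1)) (by omega)
  have k2 := key _ (Nat.prime_nth_prime (m + 2)) (by omega)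
  by_contra hlt
  have e1 : Nat.nth Nat.Prime (m + 1) = Nat.nth Nat.Prime m + 2 := by omega
  have e2 : Nat.nth Nat.Prime (m + 2) = Nat.nth Nat.Prime m + 4 := by omega
  rw [e1] at k1
  rw [e2] at k2
  obtain ⟨-, k0 | k0⟩ := k0 <;> omega

lemma vs_nth_of (i p : ℕ) (hp : p.Prime) (h : Nat.count Nat.Prime p = i) :
    Nat.nth Nat.Prime i = p := by
  rw [← h, Nat.nth_count hp]

lemma vs_n0 : Nat.nth Nat.Prime 0 = 2 := vs_nth_of _ _ (by norm_num) (by decide)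
lemma vs_n1 : Nat.nth Nat.Prime 1 = 3 := vs_nth_of _ _ (by norm_num) (by decide)
lemma vs_n2 : Nat.nth Nat.Prime 2 = 5 := vs_nth_of _ _ (by norm_num) (by decide)
lemma vs_n3 : Nat.nth Nat.Prime 3 = 7 := vs_nth_of _ _ (by norm_num) (by decide)
lemma vs_n4 : Nat.nth Nat.Prime 4 = 11 := vs_nth_of _ _ (by norm_num) (by decide)
lemma vs_n5 : Nat.nth Nat.Prime 5 = 13 := vs_nth_of _ _ (by norm_num) (by decide)
lemma vs_n6 : Nat.nth Nat.Prime 6 = 17 := vs_nth_of _ _ (by norm_num) (by decide)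
lemma vs_n7 : Nat.nth Nat.Prime 7 = 19 := vs_nth_of _ _ (by norm_num) (by decide)
lemma vs_n8 : Nat.nth Nat.Prime 8 = 23 := vs_nth_of _ _ (by norm_num) (by decide)
lemma vs_n9 : Nat.nth Nat.Prime 9 = 29 := vs_nth_of _ _ (by norm_num) (by decide)
lemma vs_n10 : Nat.nth Nat.Prime 10 = 31 := vs_nth_of _ _ (by norm_num) (by decide)
lemma vs_n11 : Nat.nth Nat.Prime 11 = 37 := vs_nth_of _ _ (by norm_num) (by decide)
lemma vs_n12 : Nat.nth Nat.Prime 12 = 41 := vs_nth_of _ _ (by norm_num) (by decide)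
lemma vs_n13 : Nat.nth Nat.Prime 13 = 43 := vs_nth_of _ _ (by norm_num) (by decide)
lemma vs_n14 : Nat.nth Nat.Prime 14 = 47 := vs_nth_of _ _ (by norm_num) (by decide)

lemma vs_nth_ge (j : ℕ) : 43 + 6 * j ≤ Nat.nth Nat.Prime (13 + 2 * j) ∧
    47 + 6 * j ≤ Nat.nth Nat.Prime (14 + 2 * j) := by
  induction j with
  | zero => simp [vs_n13, vs_n14]
  | succ j ih =>
    have h1 := vs_nth_step (13 + 2 * j) (by omega)
    have h2 := vs_nth_step (14 + 2 * j) (by omega)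
    rw [show 13 + 2 * (j + 1) = 13 + 2 * j + 2 by ring, show 14 + 2 * (j + 1) = 14 + 2 * j + 2 by ring]
    omega

lemma vs_nth_lin (m : ℕ) (hm : 13 ≤ m) : 3 * m + 4 ≤ Nat.nth Nat.Prime m := by
  obtain ⟨j, hj | hj⟩ : ∃ j, m = 13 + 2 * j ∨ m = 14 + 2 * j := ⟨(m - 13) / 2, by omega⟩
  · have := (vs_nth_ge j).1; rw [hj]; omega
  · have := (vs_nth_ge j).2; rw [hj]; omega

/-- product of the first primes -/
noncomputable def vsN (m : ℕ) : ℕ := ∏ i ∈ Finset.range m, Nat.nth Nat.Prime i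

lemma vsN_le (S : Finset ℕ) : (∀ p ∈ S, p.Prime) → vsN S.card ≤ ∏ p ∈ S, p := by
  induction S using Finset.induction_on_max with
  | empty => simp [vsN]
  | insert M S hM ih =>
    intro hS
    have hMS : M ∉ S := fun h => lt_irrefl _ (hM M h)
    rw [Finset.card_insert_of_notMem hMS, Finset.prod_insert hMS, vsN, Finset.prod_range_succ, mul_comm]
    have hc : S.card < Nat.count Nat.Prime (M + 1) := by
      rw [Nat.count_eq_card_filter_range]
      calc S.card < (insert M S).card := by rw [Finset.card_insert_of_notMem hMS]; omega
        _ ≤ _ := by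
          refine Finset.card_le_card fun x hx => ?_
          rw [Finset.mem_filter, Finset.mem_range]
          refine ⟨?_, hS x hx⟩
          rcases Finset.mem_insert.1 hx with rfl | h
          · omega
          · have := hM x h; omega
    have h1 := Nat.nth_lt_of_lt_count hc
    have h2 := ih fun p hp => hS p (Finset.mem_insert_of_mem hp)
    exact Nat.mul_le_mul (by omega) h2

lemma vsN_pos (m : ℕ) : 0 < vsN m :=
  Finset.prod_pos fun i _ => (Nat.prime_nth_prime i).pos

lemma vsN_13 (m : ℕ) (hm : 13 ≤ m) : (m : ℝ) * Real.log m ≤ Real.log (vsN m) := by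
  induction m, hm using Nat.le_induction with
  | base =>
    rw [← Real.log_pow]
    apply Real.log_le_log (by positivity)
    have : 13 ^ 13 ≤ vsN 13 := by
      simp only [vsN, Finset.prod_range_succ, Finset.prod_range_zero, vs_n0, vs_n1, vs_n2, vs_n3,
        vs_n4, vs_n5, vs_n6, vs_n7, vs_n8, vs_n9, vs_n10, vs_n11, vs_n12]
      norm_num
    exact_mod_cast this
  | succ m hm ih =>
    have hl := vs_nth_lin m hm
    have hm0 : (13 : ℝ) ≤ m := by exact_mod_cast hm
    have e1 : Real.log (vsN (m + 1)) = Real.log (vsN m) + Real.log (Nat.nth Nat.Prime m) := by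
      rw [vsN, Finset.prod_range_succ, Nat.cast_mul, Real.log_mul]
      · rfl
      · exact_mod_cast (vsN_pos m).ne'
      · exact_mod_cast (Nat.prime_nth_prime m).ne_zero
    have h2 : 1 + Real.log (m + 1) ≤ Real.log (Nat.nth Nat.Prime m) := by
      have hl' : (3 * m + 4 : ℝ) ≤ Nat.nth Nat.Prime m := by exact_mod_cast hl
      rw [Real.le_log_iff_exp_le (by linarith), Real.exp_add, Real.exp_log (by linarith)]
      have := Real.exp_one_lt_d9
      nlinarith
    have h3 : (m : ℝ) * (Real.log (m + 1) - Real.log m) ≤ 1 := by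
      rw [← Real.log_div (by positivity) (by positivity)]
      have := Real.log_le_sub_one_of_pos (x := ((m : ℝ) + 1) / m) (by positivity)
      calc (m : ℝ) * Real.log ((m + 1) / m) ≤ m * ((m + 1) / m - 1) := by gcongr
        _ = 1 := by field_simp; ring
    push_cast
    rw [e1]
    nlinarith

lemma vs_log_tangent (x c : ℝ) (hx : 0 < x) (hc : 0 < c) : Real.log x ≤ x / c - 1 + Real.log c := by
  have := Real.log_le_sub_one_of_pos (x := x / c) (by positivity)
  rw [Real.log_div hx.ne' hc.ne'] at this
  linarith

lemma vs_robin_small (m N i k c j : ℕ) (L : ℝ) (hN : Real.log N ≤ L) (hL0 : 0 < L)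
    (hc : 0 < c) (hk : 0 < k) (hck : c ^ k ≤ 2 ^ i * 1000 ^ k) (hNj : 2 ^ j ≤ N ^ 100)
    (hpos : (1000 * m : ℝ) ≤ 1.385 * c)
    (hnum : (m : ℝ) * (i * 0.6931472 / k - 1) ≤ (j * 0.6931471 / 100) * (1.385 - 1000 * m / c)) :
    (m : ℝ) * Real.log L ≤ 1.385 * L := by
  have hc' : (0 : ℝ) < c := by exact_mod_cast hc
  have hk' : (0 : ℝ) < k := by exact_mod_cast hk
  have l2 := Real.log_two_gt_d9
  have l2' := Real.log_two_lt_d9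
  have h1 := vs_log_tangent L (c / 1000) hL0 (by positivity)
  have h2 : Real.log (c / 1000 : ℝ) ≤ i * 0.6931472 / k := by
    have : (c / 1000 : ℝ) ^ k ≤ 2 ^ i := by
      rw [div_pow, div_le_iff₀ (by positivity)]
      exact_mod_cast hck
    have := Real.log_le_log (by positivity) this
    rw [Real.log_pow, Real.log_pow] at this
    rw [le_div_iff₀ hk']
    have h4 : (i : ℝ) * Real.log 2 ≤ i * 0.6931472 := by gcongr; linarith
    linarith
  have h3 : j * 0.6931471 / 100 ≤ L := by
    have : (2 : ℝ) ^ j ≤ (N : ℝ) ^ 100 := by exact_mod_cast hNj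
    have := Real.log_le_log (by positivity) this
    rw [Real.log_pow, Real.log_pow] at this
    have h4 : (j : ℝ) * 0.6931471 ≤ j * Real.log 2 := by gcongr; linarith
    push_cast at this
    linarith
  have h5 : 0 ≤ 1.385 - 1000 * (m : ℝ) / c := by
    rw [sub_nonneg, div_le_iff₀ hc']; exact hpos
  have h6 := mul_le_mul_of_nonneg_right h3 h5
  have h7 : (m : ℝ) * Real.log L ≤ m * (L / (c / 1000) - 1 + i * 0.6931472 / k) := by
    gcongr; linarith
  have h8 : (m : ℝ) * (L / (c / 1000)) = L * (1000 * m / c) := by field_simp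
  nlinarith

set_option linter.unusedSimpArgs false in
set_option exponentiation.threshold 6000 in
lemma vs_robin (n : ℕ) (hn : 3 ≤ n) :
    (n.primeFactors.card : ℝ) * Real.log (Real.log n) ≤ 1.385 * Real.log n := by
  have hn' : (3 : ℝ) ≤ n := by exact_mod_cast hn
  have hL1 : 1 < Real.log n := by
    rw [Real.lt_log_iff_exp_lt (by linarith)]
    have := Real.exp_one_lt_d9
    linarith
  have hNn : vsN n.primeFactors.card ≤ n :=
    (vsN_le _ fun p hp => Nat.prime_of_mem_primeFactors hp).trans
      (Nat.le_of_dvd (by omega) (Nat.prod_primeFactors_dvd n))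
  have hlog : Real.log (vsN n.primeFactors.card) ≤ Real.log n :=
    Real.log_le_log (by exact_mod_cast vsN_pos _) (by exact_mod_cast hNn)
  generalize n.primeFactors.card = m at *
  generalize Real.log n = L at *
  have he : ∀ y : ℝ, 0 < y → Real.log y ≤ y * 0.3679 := by
    intro y hy
    have h := vs_log_tangent y (Real.exp 1) hy (Real.exp_pos 1)
    rw [Real.log_exp] at h
    have h2 : y / Real.exp 1 ≤ y * 0.3679 := by
      rw [div_le_iff₀ (Real.exp_pos 1)]
      have := Real.exp_one_gt_d9
      nlinarith
    linarith
  by_cases h13 : 13 ≤ m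
  · have hm0 : (13 : ℝ) ≤ m := by exact_mod_cast h13
    have hB := (vsN_13 m h13).trans hlog
    set y := Real.log m with hy
    have hy1 : 1 < y := by
      rw [hy, Real.lt_log_iff_exp_lt (by linarith)]
      have := Real.exp_one_lt_d9
      linarith
    have h1 := vs_log_tangent L (m * y) (by linarith) (by positivity)
    rw [Real.log_mul (by positivity) (by positivity), ← hy] at h1
    have h2 := he y (by linarith)
    have h3 : (m : ℝ) * Real.log L ≤ m * (L / (m * y) - 1 + (y + y * 0.3679)) := by
      gcongr; linarith
    have h4 : (m : ℝ) * (L / (m * y)) = L * (1 / y) := by field_simp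
    have h5 : 1 / y * y = 1 := by field_simp
    have h6 : 1 / y ≤ 1 := by rw [div_le_one (by linarith)]; exact hy1.le
    have h7 : m * y * (1.385 - 1 / y) ≤ L * (1.385 - 1 / y) := by
      apply mul_le_mul_of_nonneg_right hB; linarith
    have h8 : m * y * (1.385 - 1 / y) = m * y * 1.385 - m := by
      linear_combination (- (m : ℝ)) * h5
    have h9 : 0 < (m : ℝ) * y := by positivity
    nlinarith
  · have hv : ∀ N : ℕ, vsN m = N → Real.log N ≤ L := by rintro N rfl; exact hlog
    have hL0 : 0 < L := by linarith
    by_cases h4 : m ≤ 3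
    · have h1 := he L hL0
      have h2 : (0 : ℝ) ≤ Real.log L := Real.log_nonneg hL1.le
      have h3 : (m : ℝ) ≤ 3 := by exact_mod_cast h4
      nlinarith
    obtain rfl | rfl | rfl | rfl | rfl | rfl | rfl | rfl | rfl : m = 4 ∨ m = 5 ∨ m = 6 ∨ m = 7 ∨
      m = 8 ∨ m = 9 ∨ m = 10 ∨ m = 11 ∨ m = 12 := by omega
    · exact vs_robin_small 4 210 63 26 5363 771 L
        (hv _ (by simp [vsN, Finset.prod_range_succ, vs_n0, vs_n1, vs_n2, vs_n3])) hL0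
        (by norm_num) (by norm_num) (by norm_num) (by norm_num) (by norm_num) (by norm_num)
    · exact vs_robin_small 5 2310 62 21 7740 1117 L
        (hv _ (by simp [vsN, Finset.prod_range_succ, vs_n0, vs_n1, vs_n2, vs_n3, vs_n4])) hL0
        (by norm_num) (by norm_num) (by norm_num) (by norm_num) (by norm_num) (by norm_num)
    · exact vs_robin_small 6 30030 118 35 10349 1487 L
        (hv _ (by simp [vsN, Finset.prod_range_succ, vs_n0, vs_n1, vs_n2, vs_n3, vs_n4, vs_n5])) hL0
        (by norm_num) (by norm_num) (by norm_num) (by norm_num) (by norm_num) (by norm_num)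
    · exact vs_robin_small 7 510510 119 32 13166 1896 L
        (hv _ (by simp [vsN, Finset.prod_range_succ, vs_n0, vs_n1, vs_n2, vs_n3, vs_n4, vs_n5, vs_n6])) hL0
        (by norm_num) (by norm_num) (by norm_num) (by norm_num) (by norm_num) (by norm_num)
    · exact vs_robin_small 8 9699690 4 1 16000 2320 L
        (hv _ (by simp [vsN, Finset.prod_range_succ, vs_n0, vs_n1, vs_n2, vs_n3, vs_n4, vs_n5, vs_n6, vs_n7])) hL0
        (by norm_num) (by norm_num) (by norm_num) (by norm_num) (by norm_num) (by norm_num)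
    · exact vs_robin_small 9 223092870 145 34 19222 2773 L
        (hv _ (by simp [vsN, Finset.prod_range_succ, vs_n0, vs_n1, vs_n2, vs_n3, vs_n4, vs_n5, vs_n6, vs_n7, vs_n8])) hL0
        (by norm_num) (by norm_num) (by norm_num) (by norm_num) (by norm_num) (by norm_num)
    · exact vs_robin_small 10 6469693230 9 2 22627 3259 L
        (hv _ (by simp [vsN, Finset.prod_range_succ, vs_n0, vs_n1, vs_n2, vs_n3, vs_n4, vs_n5, vs_n6, vs_n7, vs_n8, vs_n9])) hL0
        (by norm_num) (by norm_num) (by norm_num) (by norm_num) (by norm_num) (by norm_num)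
    · exact vs_robin_small 11 200560490130 47 10 25992 3754 L
        (hv _ (by simp [vsN, Finset.prod_range_succ, vs_n0, vs_n1, vs_n2, vs_n3, vs_n4, vs_n5, vs_n6, vs_n7, vs_n8, vs_n9, vs_n10])) hL0
        (by norm_num) (by norm_num) (by norm_num) (by norm_num) (by norm_num) (by norm_num)
    · exact vs_robin_small 12 7420738134810 83 17 29494 4275 L
        (hv _ (by simp [vsN, Finset.prod_range_succ, vs_n0, vs_n1, vs_n2, vs_n3, vs_n4, vs_n5, vs_n6, vs_n7, vs_n8, vs_n9, vs_n10, vs_n11])) hL0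
        (by norm_num) (by norm_num) (by norm_num) (by norm_num) (by norm_num) (by norm_num)

lemma vsG_le (p a r : ℕ) (P : ℝ) (hP : 0 < P) (hpP : P ≤ p) :
    vsG p a ≤ (1 + 1 / P) / 2 / 2 ^ r * (a + 1) - 1 + r * Real.log 2 := by
  have hp : (0 : ℝ) < p := by linarith
  have h := vs_log_tangent ((1 + 1 / (p : ℝ)) * ((a : ℝ) + 1) / 2) (2 ^ r) (by positivity)
    (by positivity)
  rw [Real.log_pow] at h
  rw [vsG]
  have h2 : (1 + 1 / (p : ℝ)) * ((a : ℝ) + 1) / 2 / 2 ^ r ≤ (1 + 1 / P) / 2 / 2 ^ r * (a + 1) := by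
    have h3 : 1 / (p : ℝ) ≤ 1 / P := one_div_le_one_div_of_le hP hpP
    calc (1 + 1 / (p : ℝ)) * ((a : ℝ) + 1) / 2 / 2 ^ r = (1 + 1 / (p : ℝ)) / 2 / 2 ^ r * (a + 1) := by ring
      _ ≤ _ := by gcongr
  linarith

lemma vs_log_ge (p i k : ℕ) (hk : 0 < k) (h : 2 ^ i ≤ p ^ k) :
    (i : ℝ) * 0.6931471 / k ≤ Real.log p := by
  have hk' : (0 : ℝ) < k := by exact_mod_cast hk
  have : (2 : ℝ) ^ i ≤ (p : ℝ) ^ k := by exact_mod_cast h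
  have := Real.log_le_log (by positivity) this
  rw [Real.log_pow, Real.log_pow] at this
  rw [div_le_iff₀ hk']
  have l2 := Real.log_two_gt_d9
  have h4 : (i : ℝ) * 0.6931471 ≤ i * Real.log 2 := by gcongr; linarith
  linarith

lemma vsG_A0 (p a : ℕ) (hp : 2 ≤ p) (ha : 1 ≤ a) : vsG p a ≤ 0.65 * (a * Real.log p) := by
  have h := vsG_le p a 1 2 (by norm_num) (by exact_mod_cast hp)
  have h1 := vs_log_ge p 1 1 (by norm_num) (by simpa using hp)
  have l2' := Real.log_two_lt_d9
  have ha' : (1 : ℝ) ≤ a := by exact_mod_cast ha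
  norm_num at h h1
  nlinarith

/-- constants -/
noncomputable def vsC (p : ℕ) : ℝ :=
  if p = 2 then 1.83 else if p = 3 then 1.17 else if p = 5 then 0.54 else if p = 7 then 0.54 else 0

lemma vsC_sum (S : Finset ℕ) : ∑ p ∈ S, vsC p ≤ 4.08 := by
  have h0 : ∀ p, 0 ≤ vsC p := by intro p; unfold vsC; split_ifs <;> norm_num
  calc ∑ p ∈ S, vsC p = ∑ p ∈ S ∩ {2, 3, 5, 7}, vsC p := by
        symm
        apply Finset.sum_subset Finset.inter_subset_left
        intro p hp hp2
        have : p ∉ ({2, 3, 5, 7} : Finset ℕ) := fun h => hp2 (Finset.mem_inter.2 ⟨hp, h⟩)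
        simp at this
        simp [vsC, this]
    _ ≤ ∑ p ∈ ({2, 3, 5, 7} : Finset ℕ), vsC p :=
        Finset.sum_le_sum_of_subset_of_nonneg Finset.inter_subset_right fun p _ _ => h0 p
    _ ≤ 4.08 := by simp [vsC]; norm_num

lemma vsG_A (p a : ℕ) (hp : p.Prime) (ha : 1 ≤ a) :
    vsG p a ≤ vsC p + 0.118 * (a * Real.log p) := by
  have l2 := Real.log_two_gt_d9
  have l2' := Real.log_two_lt_d9
  have ha' : (1 : ℝ) ≤ a := by exact_mod_cast ha
  by_cases h2 : p = 2
  · subst h2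
    have h := vsG_le 2 a 4 2 (by norm_num) (by norm_num)
    norm_num [vsC] at h ⊢
    nlinarith
  by_cases h3 : p = 3
  · subst h3
    have h := vsG_le 3 a 3 3 (by norm_num) (by norm_num)
    have h1 := vs_log_ge 3 1 1 (by norm_num) (by norm_num)
    have h1 := vs_log_ge 3 3 2 (by norm_num) (by norm_num)
    norm_num [vsC] at h h1 ⊢
    nlinarith
  by_cases h5 : p = 5
  · subst h5
    have h := vsG_le 5 a 2 5 (by norm_num) (by norm_num)
    have h1 := vs_log_ge 5 2 1 (by norm_num) (by norm_num)
    norm_num [vsC] at h h1 ⊢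
    nlinarith
  by_cases h7 : p = 7
  · subst h7
    have h := vsG_le 7 a 2 7 (by norm_num) (by norm_num)
    have h1 := vs_log_ge 7 2 1 (by norm_num) (by norm_num)
    norm_num [vsC] at h h1 ⊢
    nlinarith
  have h11 : 11 ≤ p := by
    by_contra hlt
    have : p ≤ 10 := by omega
    interval_cases p <;> first | omega | (revert hp; norm_num)
  have h := vsG_le p a 1 11 (by norm_num) (by exact_mod_cast h11)
  have h1 := vs_log_ge p 17 5 (by norm_num)
    (le_trans (by norm_num) (Nat.pow_le_pow_left h11 5))
  have : vsC p = 0 := by simp [vsC, h2, h3, h5, h7]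
  rw [this]
  norm_num at h h1 ⊢
  nlinarith

lemma vsG_B (p a : ℕ) (u L : ℝ) (hp : 2 ≤ p) (ha : 1 ≤ a) (hu : 9 ≤ u) (hL : Real.log L = u)
    (hL0 : 42 ≤ L) (haL : a * Real.log p ≤ L) :
    vsG p a ≤ (if (p : ℝ) ≤ Real.exp (u / 3) then u + 0.1 else 0) + 0.795 / u * (a * Real.log p) := by
  have l2 := Real.log_two_gt_d9
  have l2' := Real.log_two_lt_d9
  have ha' : (1 : ℝ) ≤ a := by exact_mod_cast ha
  have hp' : (2 : ℝ) ≤ p := by exact_mod_cast hp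
  have hlp : Real.log 2 ≤ Real.log p := Real.log_le_log (by norm_num) hp'
  split_ifs with h
  · have h1 : vsG p a ≤ u + 0.1 := by
      have h2 : vsG p a ≤ Real.log (1.1 * L) := by
        rw [vsG]
        apply Real.log_le_log (by positivity)
        have h3 : 1 / (p : ℝ) ≤ 1 / 2 := one_div_le_one_div_of_le (by norm_num) hp'
        have h4 : (1 + 1 / (p : ℝ)) * ((a : ℝ) + 1) / 2 ≤ (1 + 1 / 2) * ((a : ℝ) + 1) / 2 := by gcongr
        have h5 : (a : ℝ) * 0.69314 ≤ L := by nlinarith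
        linarith
      rw [Real.log_mul (by norm_num) (by linarith), hL] at h2
      have := Real.log_le_sub_one_of_pos (x := (1.1 : ℝ)) (by norm_num)
      linarith
    have : 0 ≤ 0.795 / u * (a * Real.log p) := by positivity
    linarith
  · push Not at h
    have hlog : u / 3 ≤ Real.log p := by
      rw [Real.le_log_iff_exp_le (by linarith)]; exact h.le
    have h17 : (17 : ℝ) ≤ p := by
      have h1 : Real.exp 3 ≤ Real.exp (u / 3) := Real.exp_le_exp.2 (by linarith)
      have h2 : Real.exp 3 = Real.exp 1 ^ 3 := by rw [← Real.exp_nat_mul]; norm_num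
      have h3 : (2.7 : ℝ) ^ 3 ≤ Real.exp 1 ^ 3 := by
        have := Real.exp_one_gt_d9
        gcongr; linarith
      norm_num at h3
      linarith
    have h := vsG_le p a 1 17 (by norm_num) h17
    have h2 : (0.265 : ℝ) * a ≤ 0.795 / u * (a * Real.log p) := by
      calc (0.265 : ℝ) * a = 0.795 / u * (a * (u / 3)) := by field_simp; norm_num
        _ ≤ _ := by gcongr
    norm_num at h ⊢
    norm_num at h2
    linarith

lemma vs_T (S : Finset ℕ) (a : ℕ → ℕ) (L : ℝ) (hS : ∀ p ∈ S, p.Prime) (ha : ∀ p ∈ S, 1 ≤ a p)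
    (hL : L = ∑ p ∈ S, a p * Real.log p) (hL1 : 1 < L) :
    ∑ p ∈ S, vsG p (a p) < 1.066 * L / Real.log L + 4 * (Real.log (Real.log L) + 1) := by
  set u := Real.log L with hu
  have hu0 : 0 < u := Real.log_pos hL1
  have hLu : L = Real.exp u := by rw [hu, Real.exp_log (by linarith)]
  have l2 := Real.log_two_gt_d9
  have l2' := Real.log_two_lt_d9
  by_cases c1 : u ≤ 1.6
  · have hT : ∑ p ∈ S, vsG p (a p) ≤ 0.65 * L := by
      rw [hL, Finset.mul_sum]
      exact Finset.sum_le_sum fun p hp => vsG_A0 _ _ (hS p hp).two_le (ha p hp)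
    have hL5 : L ≤ 5 := by
      by_contra hlt
      push Not at hlt
      have h1 : Real.exp u ^ 5 ≤ Real.exp 1 ^ 8 := by
        rw [← Real.exp_nat_mul, ← Real.exp_nat_mul]
        apply Real.exp_le_exp.2
        push_cast; linarith
      have h2 : Real.exp 1 ^ 8 ≤ (2.7183 : ℝ) ^ 8 := by
        have := Real.exp_one_lt_d9
        gcongr; linarith
      have h3 : (5 : ℝ) ^ 5 ≤ Real.exp u ^ 5 := by
        rw [← hLu]; gcongr
      norm_num at h1 h2 h3
      linarith
    have h1 := vs_log_tangent (1 / u) 4 (by positivity) (by norm_num)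
    rw [one_div, Real.log_inv, show (4 : ℝ) = 2 ^ 2 by norm_num, Real.log_pow] at h1
    have h2 : 1 + u ≤ L := by rw [hLu]; linarith [Real.add_one_le_exp u]
    have h3 : 1.066 + u⁻¹ ≤ 1.066 * L / u := by
      rw [le_div_iff₀ hu0]
      have : u⁻¹ * u = 1 := by field_simp
      nlinarith
    push_cast at h1
    linarith
  push Not at c1
  have hlu : 0.375 ≤ Real.log u := by
    have := Real.one_sub_inv_le_log_of_pos hu0
    have h2 : u⁻¹ ≤ 1.6⁻¹ := inv_anti₀ (by norm_num) c1.le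
    norm_num at h2
    linarith
  by_cases c2 : u ≤ 9
  · have hT : ∑ p ∈ S, vsG p (a p) ≤ 4.08 + 0.118 * L := by
      calc _ ≤ ∑ p ∈ S, (vsC p + 0.118 * (a p * Real.log p)) :=
            Finset.sum_le_sum fun p hp => vsG_A _ _ (hS p hp) (ha p hp)
        _ = ∑ p ∈ S, vsC p + 0.118 * L := by
            rw [Finset.sum_add_distrib, ← Finset.mul_sum, ← hL]
        _ ≤ _ := by linarith [vsC_sum S]
    have h3 : 0.118 * L ≤ 1.066 * L / u := by
      rw [le_div_iff₀ hu0]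
      nlinarith
    linarith
  push Not at c2
  set z := Real.exp (u / 3) with hz
  have hz3 : L = z ^ 3 := by
    rw [hLu, hz, ← Real.exp_nat_mul]; congr 1; push_cast; ring
  have hz20 : 20 * (u / 3 - 2) ≤ z := by
    have h1 : z = Real.exp 1 ^ 3 * Real.exp (u / 3 - 3) := by
      rw [hz, ← Real.exp_nat_mul, ← Real.exp_add]; congr 1; push_cast; ring
    have h3 : (2.718 : ℝ) ^ 3 ≤ Real.exp 1 ^ 3 := by
      have := Real.exp_one_gt_d9
      gcongr; linarith
    have h4 := Real.add_one_le_exp (u / 3 - 3)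
    rw [h1]
    calc 20 * (u / 3 - 2) ≤ Real.exp 1 ^ 3 * (u / 3 - 2) := by
          gcongr
          · linarith
          · exact le_trans (by norm_num) h3
      _ ≤ _ := by gcongr; linarith
  have hzz : 20 ≤ z := by linarith
  have hL42 : 42 ≤ L := by rw [hz3]; nlinarith [sq_nonneg z]
  have hmem : ∀ p ∈ S, a p * Real.log p ≤ L := by
    intro p hp
    rw [hL]
    exact Finset.single_le_sum (f := fun p : ℕ => (a p : ℝ) * Real.log p)
      (fun i hi => by positivity) hp
  have hT : ∑ p ∈ S, vsG p (a p) ≤ z * (u + 0.1) + 0.795 / u * L := by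
    calc _ ≤ ∑ p ∈ S, ((if (p : ℝ) ≤ z then u + 0.1 else 0) + 0.795 / u * (a p * Real.log p)) :=
          Finset.sum_le_sum fun p hp =>
            vsG_B p (a p) u L (hS p hp).two_le (ha p hp) c2.le hu.symm hL42 (hmem p hp)
      _ = ∑ p ∈ S, (if (p : ℝ) ≤ z then u + 0.1 else 0) + 0.795 / u * L := by
          rw [Finset.sum_add_distrib, ← Finset.mul_sum, ← hL]
      _ ≤ _ := by
          gcongr
          rw [← Finset.sum_filter, Finset.sum_const, nsmul_eq_mul]
          gcongr
          calc ((S.filter fun p : ℕ => (p : ℝ) ≤ z).card : ℝ) ≤ ((Finset.Icc 1 ⌊z⌋₊).card : ℝ) := by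
                norm_cast
                refine Finset.card_le_card fun p hp => ?_
                rw [Finset.mem_filter] at hp
                rw [Finset.mem_Icc]
                exact ⟨(hS p hp.1).pos, Nat.le_floor hp.2⟩
            _ = (⌊z⌋₊ : ℝ) := by simp
            _ ≤ z := Nat.floor_le (by linarith)
  have hfin : z * (u + 0.1) ≤ 0.271 / u * L := by
    rw [hz3]
    have h1 : (u + 0.1) * u ≤ 0.271 * z ^ 2 := by
      have h2 : (20 * (u / 3 - 2)) ^ 2 ≤ z ^ 2 := by
        apply pow_le_pow_left₀ _ hz20; linarith
      nlinarith
    calc z * (u + 0.1) = z * ((u + 0.1) * u) / u := by field_simp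
      _ ≤ z * (0.271 * z ^ 2) / u := by gcongr
      _ = _ := by ring
  have : 1.066 * L / u = 0.271 / u * L + 0.795 / u * L := by ring
  linarith


/-- Corollary: explicit upper bound for `v_q(σ_k(n))` for `n ≥ 3`, `k ≥ 1`
and a prime `q ≥ 3`, where `γ(n) = ∏_{p ∣ n} p` is the squarefree kernel. -/
theorem valuation_sigma_k_bound (n k q : ℕ) (hn : 3 ≤ n) (hk : 1 ≤ k) (hq : q.Prime)
    (hq3 : 3 ≤ q) :
    (padicValNat q (sigma k n) : ℝ) <
      (q - 2 : ℝ) * Real.log (∏ p ∈ n.primeFactors, (p : ℝ)) / Real.log q +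
      (1.385 * Real.log k + 1.066) * Real.log n / (Real.log q * Real.log (Real.log n)) +
      4 * (Real.log (Real.log (Real.log n)) + 1) / Real.log q := by
  have hn' : (3 : ℝ) ≤ n := by exact_mod_cast hn
  have hL1 : 1 < Real.log n := by
    rw [Real.lt_log_iff_exp_lt (by linarith)]
    have := Real.exp_one_lt_d9
    linarith
  have hu : 0 < Real.log (Real.log n) := Real.log_pos hL1
  have hq0 : 0 < Real.log q := Real.log_pos (by exact_mod_cast hq.one_lt)
  have hk0 : 0 ≤ Real.log k := Real.log_nonneg (by exact_mod_cast hk)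
  have hLsum : Real.log n = ∑ p ∈ n.primeFactors, (n.factorization p : ℝ) * Real.log p := by
    have h := Nat.prod_factorization_pow_eq_self (n := n) (by omega)
    rw [Finsupp.prod, Nat.support_factorization] at h
    have h' : (n : ℝ) = ∏ p ∈ n.primeFactors, (p : ℝ) ^ n.factorization p := by
      exact_mod_cast h.symm
    conv_lhs => rw [h']
    rw [Real.log_prod]
    · exact Finset.sum_congr rfl fun p _ => Real.log_pow _ _
    · intro p hp
      have := (Nat.prime_of_mem_primeFactors hp).pos
      positivity
  have hT := vs_T n.primeFactors n.factorization (Real.log n)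
    (fun p hp => Nat.prime_of_mem_primeFactors hp)
    (fun p hp => (Nat.prime_of_mem_primeFactors hp).factorization_pos_of_dvd (by omega)
      (Nat.dvd_of_mem_primeFactors hp)) hLsum hL1
  have hM := vs_main n k q (by omega) hk hq hq3
  have hR := vs_robin n hn
  rw [← le_div_iff₀ hu] at hR
  have hRk := mul_le_mul_of_nonneg_right hR hk0
  have e : (q - 2 : ℝ) * Real.log (∏ p ∈ n.primeFactors, (p : ℝ)) / Real.log q +
      (1.385 * Real.log k + 1.066) * Real.log n / (Real.log q * Real.log (Real.log n)) +
      4 * (Real.log (Real.log (Real.log n)) + 1) / Real.log q =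
      ((q - 2 : ℝ) * Real.log (∏ p ∈ n.primeFactors, (p : ℝ)) +
      (1.385 * Real.log n / Real.log (Real.log n) * Real.log k +
        1.066 * Real.log n / Real.log (Real.log n)) +
      4 * (Real.log (Real.log (Real.log n)) + 1)) / Real.log q := by
    field_simp
  rw [e, lt_div_iff₀ hq0]
  linarith
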